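/- Let v₀ : ℝ → ℝ be bounded and measurable, and let v : [0,∞) × ℝ → ℝ be a bounded weak solution of the Burgers conservation law v_t + (v²/2)_x = 0 with initial data v₀, such that t ↦ v(t,·) is continuous from [0,∞) into L¹_loc(ℝ). Suppose v₀ has mean value M. Then for every t ≥ 0, the function x ↦ v(t,x) has the same mean value M. -/

import Mathlib

/-!
Test the equation against `φ(t, x) = χ(t) ψ(x)`, where `ψ` is a smooth plateau equal to `1` on
`[a, a + L]` with transition layers of width `1`, and `χ` is a smooth cutoff falling from `1` to
`0` on `[T, T + ε]`. The flux term is bounded by `(T + 1) sup|v²/2| ∫|ψ'|`, and `∫|ψ'| ≤ 2`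
whatever `a` and `L` are (`integral_mul_deriv_plateau_le`). The term with `χ'` is minus an average
over `[T, T + ε]` of `t ↦ ∫ v(t, x) ψ(x) dx`; continuity in `L¹_loc` allows `ε` (depending on `a`
and `L`) to be chosen so that this average is within `1` of the value at `T`
(`time_cutoff_estimate`). Hence `∫ v(T, ·) ψ` and `∫ v₀ ψ` differ by at most a constant independent
of `a` and `L` (`smoothed_mass_estimate`), and replacing `ψ` by the indicator of `[a, a + L]` costs
another such constant (`integral_mul_plateau_sub`). Dividing by `L → ∞` gives the claim, uniformly
in `a`. No limit `ε → 0` is needed, since bounded errors vanish after division by `L`.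
-/


open MeasureTheory Filter

/-- `ψ` has mean value `M`: `(1/L)∫_a^{a+L} ψ → M` as `L → ∞`, uniformly in `a`. -/
def HasMeanValue (ψ : ℝ → ℝ) (M : ℝ) : Prop :=
  TendstoUniformly (fun (L : ℝ) (a : ℝ) => (1 / L) * ∫ x in a..(a + L), ψ x)
    (fun _ => M) atTop

/-- `v` is a bounded weak solution of the Burgers conservation law
`v_t + (v²/2)_x = 0` on `[0,∞) × ℝ` with initial data `v₀`. -/
def IsBoundedWeakSolBurgers (v₀ : ℝ → ℝ) (v : ℝ → ℝ → ℝ) : Prop :=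
  Measurable (Function.uncurry v) ∧ (∃ C : ℝ, ∀ t x, |v t x| ≤ C) ∧
  ∀ φ : ℝ → ℝ → ℝ, ContDiff ℝ (⊤ : ℕ∞) (Function.uncurry φ) →
    HasCompactSupport (Function.uncurry φ) →
    (∫ t in Set.Ioi (0:ℝ), ∫ x : ℝ,
        (v t x * deriv (fun s => φ s x) t + (v t x) ^ 2 / 2 * deriv (fun y => φ t y) x))
      + (∫ x : ℝ, v₀ x * φ 0 x) = 0

/-! ### The smooth step -/

open Real in
theorem smoothTransition_hasDerivAt (x : ℝ) :
    HasDerivAt smoothTransition (deriv smoothTransition x) x :=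
  ((smoothTransition.contDiff (n := 1)).differentiable (by norm_num) x).hasDerivAt

theorem continuous_deriv_smoothTransition : Continuous (deriv Real.smoothTransition) :=
  (Real.smoothTransition.contDiff (n := 1)).continuous_deriv (by norm_num)

theorem deriv_smoothTransition_nonneg (x : ℝ) : 0 ≤ deriv Real.smoothTransition x :=
  Real.smoothTransition.monotone.deriv_nonneg

theorem deriv_smoothTransition_eq_zero {x : ℝ} (hx : x ∉ Set.Icc (0 : ℝ) 1) :
    deriv Real.smoothTransition x = 0 := by
  rw [Set.mem_Icc, not_and_or, not_le, not_le] at hx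
  rcases hx with hx | hx
  · have : Real.smoothTransition =ᶠ[nhds x] fun _ => 0 := by
      filter_upwards [Iio_mem_nhds hx] with y hy using
        Real.smoothTransition.zero_of_nonpos (le_of_lt hy)
    rw [this.deriv_eq]; simp
  · have : Real.smoothTransition =ᶠ[nhds x] fun _ => 1 := by
      filter_upwards [Ioi_mem_nhds hx] with y hy using
        Real.smoothTransition.one_of_one_le (le_of_lt hy)
    rw [this.deriv_eq]; simp

theorem hasCompactSupport_deriv_smoothTransition :
    HasCompactSupport (deriv Real.smoothTransition) :=
  HasCompactSupport.intro isCompact_Icc fun _ hx => deriv_smoothTransition_eq_zero hx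

theorem integrable_deriv_smoothTransition : Integrable (deriv Real.smoothTransition) :=
  continuous_deriv_smoothTransition.integrable_of_hasCompactSupport
    hasCompactSupport_deriv_smoothTransition

theorem tendsto_smoothTransition_atTop : Tendsto Real.smoothTransition atTop (nhds 1) := by
  refine tendsto_const_nhds.congr' ?_
  filter_upwards [eventually_ge_atTop 1] with y hy using
    (Real.smoothTransition.one_of_one_le hy).symm

theorem integral_deriv_smoothTransition : ∫ x, deriv Real.smoothTransition x = 1 := by
  have hbot : Tendsto Real.smoothTransition atBot (nhds 0) := by
    refine tendsto_const_nhds.congr' ?_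
    filter_upwards [eventually_le_atBot 0] with y hy using
      (Real.smoothTransition.zero_of_nonpos hy).symm
  rw [integral_of_hasDerivAt_of_tendsto smoothTransition_hasDerivAt
    integrable_deriv_smoothTransition hbot tendsto_smoothTransition_atTop, sub_zero]

/-! ### The spatial plateau -/

/-- The smooth plateau that equals `1` on `[a, a + L]` and vanishes outside
`[a - 1, a + L + 1]`. -/
noncomputable def plateau (a L x : ℝ) : ℝ :=
  Real.smoothTransition (x - (a - 1)) - Real.smoothTransition (x - (a + L))

theorem plateau_contDiff (a L : ℝ) : ContDiff ℝ (⊤ : ℕ∞) (plateau a L) := by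
  unfold plateau
  exact (Real.smoothTransition.contDiff.comp (contDiff_id.sub contDiff_const)).sub
    (Real.smoothTransition.contDiff.comp (contDiff_id.sub contDiff_const))

theorem plateau_hasDerivAt (a L x : ℝ) :
    HasDerivAt (plateau a L) (deriv Real.smoothTransition (x - (a - 1)) -
      deriv Real.smoothTransition (x - (a + L))) x :=
  ((smoothTransition_hasDerivAt _).comp_sub_const x _).sub
    ((smoothTransition_hasDerivAt _).comp_sub_const x _)

theorem plateau_eq_zero {a L x : ℝ} (hL : 0 ≤ L) (hx : x ∉ Set.Icc (a - 1) (a + L + 1)) :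
    plateau a L x = 0 := by
  rw [Set.mem_Icc, not_and_or, not_le, not_le] at hx
  unfold plateau
  rcases hx with hx | hx
  · rw [Real.smoothTransition.zero_of_nonpos (by linarith),
      Real.smoothTransition.zero_of_nonpos (by linarith), sub_zero]
  · rw [Real.smoothTransition.one_of_one_le (by linarith),
      Real.smoothTransition.one_of_one_le (by linarith), sub_self]

theorem plateau_eq_one {a L x : ℝ} (hx : x ∈ Set.Icc a (a + L)) : plateau a L x = 1 := by
  unfold plateau
  rw [Real.smoothTransition.one_of_one_le (by linarith [hx.1]),
      Real.smoothTransition.zero_of_nonpos (by linarith [hx.2]), sub_zero]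

theorem plateau_nonneg {a L x : ℝ} (hL : 0 ≤ L) : 0 ≤ plateau a L x :=
  sub_nonneg.2 (Real.smoothTransition.monotone (by linarith))

theorem plateau_le_one (a L x : ℝ) : plateau a L x ≤ 1 := by
  unfold plateau
  linarith [Real.smoothTransition.le_one (x - (a - 1)),
    Real.smoothTransition.nonneg (x - (a + L))]

theorem plateau_hasCompactSupport {a L : ℝ} (hL : 0 ≤ L) : HasCompactSupport (plateau a L) :=
  HasCompactSupport.intro isCompact_Icc fun _ hx => plateau_eq_zero hL hx

theorem plateau_integrable {a L : ℝ} (hL : 0 ≤ L) : Integrable (plateau a L) :=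
  (plateau_contDiff a L).continuous.integrable_of_hasCompactSupport
    (plateau_hasCompactSupport hL)

theorem integrable_mul_plateau {a L C : ℝ} {u : ℝ → ℝ} (hL : 0 ≤ L) (hu : Measurable u)
    (hC : ∀ x, |u x| ≤ C) : Integrable fun x => u x * plateau a L x :=
  (plateau_integrable hL).bdd_mul hu.aestronglyMeasurable (ae_of_all _ hC)

/-- Smoothing the indicator of `[a, a + L]` changes the integral of a bounded function by an
amount that does not depend on `a` and `L`. -/
theorem integral_mul_plateau_sub {a L C : ℝ} {u : ℝ → ℝ} (hL : 0 ≤ L) (hu : Measurable u)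
    (hC : ∀ x, |u x| ≤ C) :
    |(∫ x, u x * plateau a L x) - ∫ x in a..(a + L), u x| ≤ 2 * C := by
  have hC0 : 0 ≤ C := (abs_nonneg _).trans (hC 0)
  have hi : Integrable ((Set.Ioc a (a + L)).indicator u) := by
    rw [integrable_indicator_iff measurableSet_Ioc]
    exact Measure.integrableOn_of_bounded (M := C) (by simp) hu.aestronglyMeasurable
      (ae_of_all _ hC)
  rw [intervalIntegral.integral_of_le (by linarith), ← integral_indicator measurableSet_Ioc,
    ← integral_sub (integrable_mul_plateau hL hu hC) hi]
  have hb1 : Integrable ((Set.Icc (a - 1) a).indicator fun _ : ℝ => C) :=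
    (integrable_indicator_iff measurableSet_Icc).2 (by simp)
  have hb2 : Integrable ((Set.Icc (a + L) (a + L + 1)).indicator fun _ : ℝ => C) :=
    (integrable_indicator_iff measurableSet_Icc).2 (by simp)
  rw [← Real.norm_eq_abs]
  refine (norm_integral_le_of_norm_le (hb1.add hb2) (ae_of_all _ fun x => ?_)).trans ?_
  · have n1 : 0 ≤ (Set.Icc (a - 1) a).indicator (fun _ : ℝ => C) x :=
      Set.indicator_nonneg (fun _ _ => hC0) x
    have n2 : 0 ≤ (Set.Icc (a + L) (a + L + 1)).indicator (fun _ : ℝ => C) x :=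
      Set.indicator_nonneg (fun _ _ => hC0) x
    have hle : ‖u x * plateau a L x‖ ≤ C := by
      rw [norm_mul, ← mul_one C]
      refine mul_le_mul (hC x) ?_ (norm_nonneg _) hC0
      rw [Real.norm_of_nonneg (plateau_nonneg hL)]
      exact plateau_le_one a L x
    simp only [Pi.add_apply]
    by_cases hx : x ∈ Set.Ioc a (a + L)
    · rw [Set.indicator_of_mem hx, plateau_eq_one ⟨hx.1.le, hx.2⟩, mul_one, sub_self, norm_zero]
      exact add_nonneg n1 n2
    · rw [Set.indicator_of_notMem hx, sub_zero]
      by_cases h1 : x ∈ Set.Icc (a - 1) a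
      · rw [Set.indicator_of_mem h1]; linarith
      by_cases h2 : x ∈ Set.Icc (a + L) (a + L + 1)
      · rw [Set.indicator_of_mem h2]; linarith
      rw [plateau_eq_zero hL, mul_zero, norm_zero]
      · exact add_nonneg n1 n2
      · simp only [Set.mem_Icc, Set.mem_Ioc, not_and_or, not_le, not_lt] at *
        grind
  · simp only [Pi.add_apply]
    rw [integral_add hb1 hb2, integral_indicator measurableSet_Icc,
      integral_indicator measurableSet_Icc]
    simp only [integral_const, MeasurableSet.univ, measureReal_restrict_apply, Set.univ_inter,
      Real.volume_real_Icc, smul_eq_mul]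
    norm_num
    linarith

theorem integrable_deriv_plateau (a L : ℝ) : Integrable (deriv (plateau a L)) := by
  have : deriv (plateau a L) = fun x => deriv Real.smoothTransition (x - (a - 1)) -
      deriv Real.smoothTransition (x - (a + L)) := funext fun x => (plateau_hasDerivAt a L x).deriv
  rw [this]
  exact (integrable_deriv_smoothTransition.comp_sub_right _).sub
    (integrable_deriv_smoothTransition.comp_sub_right _)

/-- The total variation of the plateau is at most `2`, so pairing its derivative with a bounded
flux gives a bound independent of `a` and `L`. -/
theorem integral_mul_deriv_plateau_le {a L C : ℝ} {w : ℝ → ℝ} (hC : ∀ x, |w x| ≤ C) :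
    |∫ x, w x * deriv (plateau a L) x| ≤ 2 * C := by
  have hC0 : 0 ≤ C := (abs_nonneg _).trans (hC 0)
  have h1 := integrable_deriv_smoothTransition.comp_sub_right (a - 1)
  have h2 := integrable_deriv_smoothTransition.comp_sub_right (a + L)
  rw [← Real.norm_eq_abs]
  refine (norm_integral_le_of_norm_le ((h1.add h2).const_mul C) (ae_of_all _ fun x => ?_)).trans ?_
  · rw [norm_mul, (plateau_hasDerivAt a L x).deriv]
    refine mul_le_mul (hC x) ?_ (norm_nonneg _) hC0
    refine (norm_sub_le _ _).trans (le_of_eq ?_)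
    rw [Real.norm_of_nonneg (deriv_smoothTransition_nonneg _),
      Real.norm_of_nonneg (deriv_smoothTransition_nonneg _)]
    rfl
  · simp only [Pi.add_apply]
    rw [integral_const_mul, integral_add h1 h2,
      integral_sub_right_eq_self (deriv Real.smoothTransition),
      integral_sub_right_eq_self (deriv Real.smoothTransition), integral_deriv_smoothTransition]
    linarith

/-! ### Testing the equation -/

/-- The time part of the argument: testing against the cutoff `1 - σ((t - T)/ε)`, which falls
from `1` to `0` on `[T, T + ε]`. The term containing its derivative is minus an average of `g`
over `[T, T + ε]`. -/
theorem time_cutoff_estimate {T ε B C₁ g₀ : ℝ} {g h : ℝ → ℝ} (hT : 0 ≤ T) (hε : 0 < ε)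
    (hε1 : ε ≤ 1) (hgm : Measurable g) (hhm : Measurable h) (hg : ∀ t, |g t| ≤ C₁)
    (hh : ∀ t, |h t| ≤ B) (hgc : ∀ t ∈ Set.Icc T (T + ε), |g t - g₀| ≤ 1) :
    |(∫ t in Set.Ioi (0 : ℝ), (-(deriv Real.smoothTransition ((t - T) / ε) / ε) * g t
        + (1 - Real.smoothTransition ((t - T) / ε)) * h t)) + g₀| ≤ 1 + (T + 1) * B := by
  have hB0 : 0 ≤ B := (abs_nonneg _).trans (hh 0)
  set k : ℝ → ℝ := fun t => deriv Real.smoothTransition ((t - T) / ε) / ε with hk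
  have hk0 : ∀ t, 0 ≤ k t := fun t => div_nonneg (deriv_smoothTransition_nonneg _) hε.le
  have hkz : ∀ t, t ∉ Set.Icc T (T + ε) → k t = 0 := by
    intro t ht
    simp only [hk]
    rw [deriv_smoothTransition_eq_zero, zero_div]
    intro h'
    refine ht ⟨?_, ?_⟩
    · have := h'.1
      rw [le_div_iff₀ hε] at this; linarith
    · have := h'.2
      rw [div_le_iff₀ hε] at this; linarith
  have hkc : Continuous k :=
    (continuous_deriv_smoothTransition.comp (by fun_prop)).div_const _
  have hki : Integrable k := hkc.integrable_of_hasCompactSupport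
    (HasCompactSupport.intro isCompact_Icc hkz)
  have hkI : ∫ t in Set.Ioi (0 : ℝ), k t = 1 := by
    have hd : ∀ t, HasDerivAt (fun t => Real.smoothTransition ((t - T) / ε)) (k t) t := by
      intro t
      have := (smoothTransition_hasDerivAt ((t - T) / ε)).comp t
        (((hasDerivAt_id t).sub_const T).div_const ε)
      exact this.congr_deriv (by simp only [hk]; ring)
    rw [integral_Ioi_of_hasDerivAt_of_tendsto (m := 1) (hd 0).continuousAt.continuousWithinAt
      (fun t _ => hd t) hki.integrableOn]
    · rw [Real.smoothTransition.zero_of_nonpos, sub_zero]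
      exact div_nonpos_of_nonpos_of_nonneg (by linarith) hε.le
    · refine tendsto_smoothTransition_atTop.comp (Tendsto.atTop_div_const hε ?_)
      exact tendsto_atTop_add_const_right _ _ tendsto_id
  have hbi : Integrable ((Set.Icc 0 (T + 1)).indicator fun _ : ℝ => B) :=
    (integrable_indicator_iff measurableSet_Icc).2 (by simp)
  have hbI : ∫ t, (Set.Icc 0 (T + 1)).indicator (fun _ : ℝ => B) t = (T + 1) * B := by
    rw [integral_indicator measurableSet_Icc]
    simp only [integral_const, MeasurableSet.univ, measureReal_restrict_apply, Set.univ_inter,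
      Real.volume_real_Icc, smul_eq_mul]
    rw [max_eq_left (by linarith), sub_zero]
  have hχh : ∀ t ∈ Set.Ioi (0 : ℝ), ‖(1 - Real.smoothTransition ((t - T) / ε)) * h t‖ ≤
      (Set.Icc 0 (T + 1)).indicator (fun _ : ℝ => B) t := by
    intro t ht
    by_cases htT : t ≤ T + 1
    · rw [Set.indicator_of_mem (show t ∈ Set.Icc 0 (T + 1) from ⟨le_of_lt ht, htT⟩), norm_mul, ← one_mul B]
      refine mul_le_mul ?_ (hh t) (norm_nonneg _) zero_le_one
      have h1 := Real.smoothTransition.le_one ((t - T) / ε)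
      have h2 := Real.smoothTransition.nonneg ((t - T) / ε)
      rw [Real.norm_of_nonneg (by linarith)]
      linarith
    · rw [Real.smoothTransition.one_of_one_le, sub_self, zero_mul, norm_zero]
      · exact Set.indicator_nonneg (fun _ _ => hB0) t
      · rw [le_div_iff₀ hε]; linarith
  have hkg : Integrable (fun t => k t * g t) (volume.restrict (Set.Ioi 0)) :=
    hki.integrableOn.mul_bdd (c := C₁) hgm.aestronglyMeasurable (ae_of_all _ hg)
  have hch : Integrable (fun t => (1 - Real.smoothTransition ((t - T) / ε)) * h t)
      (volume.restrict (Set.Ioi 0)) := by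
    refine hbi.integrableOn.mono' ?_ ((ae_restrict_iff' measurableSet_Ioi).2 (ae_of_all _ hχh))
    have : Continuous fun t : ℝ => 1 - Real.smoothTransition ((t - T) / ε) :=
      continuous_const.sub (Real.smoothTransition.continuous.comp (by fun_prop))
    exact (this.measurable.mul hhm).aestronglyMeasurable
  have hsplit : (∫ t in Set.Ioi (0 : ℝ), (-(k t) * g t
        + (1 - Real.smoothTransition ((t - T) / ε)) * h t)) + g₀ =
      ∫ t in Set.Ioi (0 : ℝ), (-(k t * (g t - g₀))
        + (1 - Real.smoothTransition ((t - T) / ε)) * h t) := by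
    have e : ∀ t, -(k t * (g t - g₀)) + (1 - Real.smoothTransition ((t - T) / ε)) * h t =
        (-(k t) * g t + (1 - Real.smoothTransition ((t - T) / ε)) * h t) + k t * g₀ :=
      fun t => by ring
    simp_rw [e]
    rw [integral_add _ (hki.integrableOn.mul_const g₀), integral_mul_const, hkI, one_mul]
    simp only [neg_mul]
    exact hkg.neg.add hch
  rw [hsplit, ← Real.norm_eq_abs]
  refine (norm_integral_le_of_norm_le (hki.integrableOn.add hbi.integrableOn)
    ((ae_restrict_iff' measurableSet_Ioi).2 (ae_of_all _ fun t ht => ?_))).trans ?_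
  · refine (norm_add_le _ _).trans (add_le_add ?_ (hχh t ht))
    rw [norm_neg, norm_mul, Real.norm_of_nonneg (hk0 t)]
    by_cases htI : t ∈ Set.Icc T (T + ε)
    · exact mul_le_of_le_one_right (hk0 t) (hgc t htI)
    · rw [hkz t htI, zero_mul]
  · simp only [Pi.add_apply]
    rw [integral_add hki.integrableOn hbi.integrableOn, ← hbI, hkI]
    exact add_le_add le_rfl (integral_mono_measure Measure.restrict_le_self
      (ae_of_all _ fun t => Set.indicator_nonneg (fun _ _ => hB0) t) hbi)

/-- Smoothed masses on windows of arbitrary length stay within a distance of the initial ones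
that depends only on the time and the bound of the solution. -/
theorem smoothed_mass_estimate
    {v₀ : ℝ → ℝ} {v : ℝ → ℝ → ℝ} (hv : IsBoundedWeakSolBurgers v₀ v)
    (hcont : ∀ K : Set ℝ, IsCompact K → ∀ t₀ ∈ Set.Ici (0:ℝ),
      Tendsto (fun t => ∫ x in K, |v t x - v t₀ x|) (nhdsWithin t₀ (Set.Ici 0)) (nhds 0))
    {C T a L : ℝ} (hC : ∀ t x, |v t x| ≤ C) (hT : 0 ≤ T) (hL : 0 ≤ L) :
    |(∫ x, v T x * plateau a L x) - ∫ x, v₀ x * plateau a L x| ≤ 1 + (T + 1) * C ^ 2 := by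
  obtain ⟨hvm, -, hw⟩ := hv
  have hC0 : 0 ≤ C := (abs_nonneg _).trans (hC 0 0)
  have hvt : ∀ t, Measurable (v t) := fun t => hvm.comp measurable_prodMk_left
  have hsq : ∀ t x, |v t x ^ 2 / 2| ≤ C ^ 2 / 2 := by
    intro t x
    rw [abs_of_nonneg (by positivity)]
    have := sq_le_sq' (abs_le.1 (hC t x)).1 (abs_le.1 (hC t x)).2
    linarith
  obtain ⟨ε, hε, hε1, hclose⟩ : ∃ ε : ℝ, 0 < ε ∧ ε ≤ 1 ∧ ∀ t ∈ Set.Icc T (T + ε),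
      ∫ x in Set.Icc (a - 1) (a + L + 1), |v t x - v T x| ≤ 1 := by
    have h := hcont (Set.Icc (a - 1) (a + L + 1)) isCompact_Icc T hT
    have h1 := h.eventually (gt_mem_nhds zero_lt_one)
    rw [eventually_nhdsWithin_iff, Metric.eventually_nhds_iff] at h1
    obtain ⟨δ, hδ, h1⟩ := h1
    refine ⟨min (δ / 2) 1, by positivity, min_le_right _ _, fun t ht => (h1 ?_ ?_).le⟩
    · rw [Real.dist_eq, abs_lt]
      have := min_le_left (δ / 2) 1
      constructor <;> linarith [ht.1, ht.2]
    · exact hT.trans ht.1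
  set g : ℝ → ℝ := fun t => ∫ x, v t x * plateau a L x with hg
  set h : ℝ → ℝ := fun t => ∫ x, v t x ^ 2 / 2 * deriv (plateau a L) x with hh
  have hψm : Measurable (plateau a L) := (plateau_contDiff a L).continuous.measurable
  have hgm : Measurable g := by
    have : Measurable (Function.uncurry fun t x => v t x * plateau a L x) :=
      hvm.mul (hψm.comp measurable_snd)
    exact this.stronglyMeasurable.integral_prod_right.measurable
  have hhm : Measurable h := by
    have : Measurable (Function.uncurry fun t x => v t x ^ 2 / 2 * deriv (plateau a L) x) :=
      ((hvm.pow_const 2).div_const 2).mul ((measurable_deriv _).comp measurable_snd)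
    exact this.stronglyMeasurable.integral_prod_right.measurable
  have hgb : ∀ t, |g t| ≤ ∫ x, C * plateau a L x := by
    intro t
    rw [← Real.norm_eq_abs]
    refine norm_integral_le_of_norm_le ((plateau_integrable hL).const_mul C)
      (ae_of_all _ fun x => ?_)
    rw [norm_mul, Real.norm_of_nonneg (plateau_nonneg hL)]
    exact mul_le_mul_of_nonneg_right (hC t x) (plateau_nonneg hL)
  have hhb : ∀ t, |h t| ≤ C ^ 2 := fun t =>
    (integral_mul_deriv_plateau_le (hsq t)).trans (by linarith)
  have hgc : ∀ t ∈ Set.Icc T (T + ε), |g t - g T| ≤ 1 := by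
    intro t ht
    refine le_trans ?_ (hclose t ht)
    simp only [hg]
    rw [← integral_sub (integrable_mul_plateau hL (hvt t) (hC t))
      (integrable_mul_plateau hL (hvt T) (hC T)), ← integral_indicator measurableSet_Icc]
    rw [← Real.norm_eq_abs]
    refine norm_integral_le_of_norm_le ?_ (ae_of_all _ fun x => ?_)
    · rw [integrable_indicator_iff measurableSet_Icc]
      refine Measure.integrableOn_of_bounded (M := C + C) (by simp)
        ((hvt t).sub (hvt T)).abs.aestronglyMeasurable (ae_of_all _ fun x => ?_)
      rw [Real.norm_eq_abs, abs_abs]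
      exact (abs_sub _ _).trans (add_le_add (hC t x) (hC T x))
    · by_cases hx : x ∈ Set.Icc (a - 1) (a + L + 1)
      · rw [Set.indicator_of_mem hx, ← sub_mul, norm_mul,
          Real.norm_of_nonneg (plateau_nonneg hL)]
        exact mul_le_of_le_one_right (norm_nonneg _) (plateau_le_one a L x)
      · rw [Set.indicator_of_notMem hx, plateau_eq_zero hL hx]
        simp
  have key := time_cutoff_estimate hT hε hε1 hgm hhm hgb hhb hgc
  -- The factor `σ(t + 2)` is `1` for `t ≥ -1`; it only makes the support compact in time.
  set χ : ℝ → ℝ := fun t =>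
    Real.smoothTransition (t + 2) - Real.smoothTransition ((t - T) / ε) with hχ
  have hχc : ContDiff ℝ (⊤ : ℕ∞) χ :=
    (Real.smoothTransition.contDiff.comp (contDiff_id.add contDiff_const)).sub
      (Real.smoothTransition.contDiff.comp ((contDiff_id.sub contDiff_const).div_const ε))
  have hχz : ∀ t, t ∉ Set.Icc (-2) (T + ε) → χ t = 0 := by
    intro t ht
    rw [Set.mem_Icc, not_and_or, not_le, not_le] at ht
    simp only [hχ]
    rcases ht with ht | ht
    · rw [Real.smoothTransition.zero_of_nonpos (by linarith),
        Real.smoothTransition.zero_of_nonpos, sub_self]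
      exact div_nonpos_of_nonpos_of_nonneg (by linarith) hε.le
    · rw [Real.smoothTransition.one_of_one_le (by linarith),
        Real.smoothTransition.one_of_one_le, sub_self]
      rw [le_div_iff₀ hε]; linarith
  have hχ0 : χ 0 = 1 := by
    simp only [hχ]
    rw [Real.smoothTransition.one_of_one_le (by norm_num),
      Real.smoothTransition.zero_of_nonpos, sub_zero]
    exact div_nonpos_of_nonpos_of_nonneg (by linarith) hε.le
  have hχpos : ∀ t, 0 < t → χ t = 1 - Real.smoothTransition ((t - T) / ε) := by
    intro t ht
    simp only [hχ]
    rw [Real.smoothTransition.one_of_one_le (by linarith)]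
  have hχd : ∀ t, 0 < t →
      deriv χ t = -(deriv Real.smoothTransition ((t - T) / ε) / ε) := by
    intro t ht
    have e : χ =ᶠ[nhds t] fun t => 1 - Real.smoothTransition ((t - T) / ε) := by
      filter_upwards [Ioi_mem_nhds ht] with s hs using hχpos s hs
    rw [e.deriv_eq]
    have := ((smoothTransition_hasDerivAt ((t - T) / ε)).comp t
        (((hasDerivAt_id t).sub_const T).div_const ε)).const_sub 1
    exact (this.congr_deriv (by ring)).deriv
  have hweak := hw (fun t x => χ t * plateau a L x)
    ((hχc.comp contDiff_fst).mul ((plateau_contDiff a L).comp contDiff_snd))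
    (HasCompactSupport.intro (isCompact_Icc.prod isCompact_Icc
      (s := Set.Icc (-2) (T + ε)) (t := Set.Icc (a - 1) (a + L + 1))) (by
      rintro ⟨t, x⟩ hp
      change χ t * plateau a L x = 0
      by_cases ht : t ∈ Set.Icc (-2) (T + ε)
      · rw [plateau_eq_zero hL fun hx => hp ⟨ht, hx⟩, mul_zero]
      · rw [hχz t ht, zero_mul]))
  have hcongr : (∫ t in Set.Ioi (0:ℝ), ∫ x : ℝ,
        (v t x * deriv (fun s => χ s * plateau a L x) t
          + (v t x) ^ 2 / 2 * deriv (fun y => χ t * plateau a L y) x)) =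
      ∫ t in Set.Ioi (0 : ℝ), (-(deriv Real.smoothTransition ((t - T) / ε) / ε) * g t
        + (1 - Real.smoothTransition ((t - T) / ε)) * h t) := by
    refine setIntegral_congr_fun measurableSet_Ioi fun t ht => ?_
    rw [← hχd t ht, ← hχpos t ht]
    simp only [hg, hh]
    rw [← integral_const_mul, ← integral_const_mul, ← integral_add]
    · refine integral_congr_ae (ae_of_all _ fun x => ?_)
      simp only
      rw [deriv_mul_const_field, deriv_const_mul_field]
      ring
    · exact (integrable_mul_plateau hL (hvt t) (hC t)).const_mul _
    · exact ((integrable_deriv_plateau a L).bdd_mul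
        (((hvt t).pow_const 2).div_const 2).aestronglyMeasurable
        (ae_of_all _ (hsq t))).const_mul _
  simp only [hχ0, one_mul] at hweak
  rw [hcongr] at hweak
  rw [eq_neg_of_add_eq_zero_left hweak] at key
  have e : (∫ x, v T x * plateau a L x) - ∫ x, v₀ x * plateau a L x =
    -(∫ x, v₀ x * plateau a L x) + g T := by simp only [hg]; ring
  rw [e]
  exact key

/-! ### Mean values -/

/-- if `v₀` is bounded measurable with mean value `M` and `v` is a bounded
weak solution of `v_t + (v²/2)_x = 0` with data `v₀` which is continuous in time with
values in `L¹_loc(ℝ)`, then `v(t,·)` has the same mean value `M` for every `t ≥ 0`. -/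
theorem weak_solution_preserves_mean_value
    (v₀ : ℝ → ℝ) (hmeas₀ : Measurable v₀) (hbd₀ : ∃ C : ℝ, ∀ x, |v₀ x| ≤ C)
    (v : ℝ → ℝ → ℝ) (hv : IsBoundedWeakSolBurgers v₀ v)
    (hcont : ∀ K : Set ℝ, IsCompact K → ∀ t₀ ∈ Set.Ici (0:ℝ),
      Tendsto (fun t => ∫ x in K, |v t x - v t₀ x|) (nhdsWithin t₀ (Set.Ici 0)) (nhds 0))
    (M : ℝ) (hM : HasMeanValue v₀ M) :
    ∀ t ∈ Set.Ici (0:ℝ), HasMeanValue (v t) M := by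
  intro T hT
  obtain ⟨C₀, hC₀⟩ := hbd₀
  obtain ⟨C, hC⟩ := hv.2.1
  have hvT : Measurable (v T) := hv.1.comp measurable_prodMk_left
  obtain ⟨D, hD⟩ : ∃ D : ℝ, ∀ a L : ℝ, 0 ≤ L →
      |(∫ x in a..(a + L), v T x) - ∫ x in a..(a + L), v₀ x| ≤ D := by
    refine ⟨2 * C + (1 + (T + 1) * C ^ 2) + 2 * C₀, fun a L hL => ?_⟩
    have h1 := abs_le.1 (integral_mul_plateau_sub (a := a) hL hvT (hC T))
    have h2 := abs_le.1 (integral_mul_plateau_sub (a := a) hL hmeas₀ hC₀)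
    have h3 := abs_le.1 (smoothed_mass_estimate (a := a) hv hcont hC hT hL)
    rw [abs_le]
    constructor <;> linarith [h1.1, h1.2, h2.1, h2.2, h3.1, h3.2]
  unfold HasMeanValue at hM ⊢
  rw [Metric.tendstoUniformly_iff] at hM ⊢
  intro η hη
  filter_upwards [hM (η / 2) (by linarith), eventually_gt_atTop 0,
    eventually_gt_atTop (2 * D / η)] with L h1 hL hLD a
  have h2 := h1 a
  have h3 := hD a L hL.le
  rw [Real.dist_eq] at h2 ⊢
  rw [div_lt_iff₀ hη] at hLD
  have h4 : |1 / L * (∫ x in a..(a + L), v T x) - 1 / L * ∫ x in a..(a + L), v₀ x| < η / 2 := by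
    rw [← mul_sub, abs_mul, abs_of_pos (by positivity), one_div_mul_eq_div, div_lt_iff₀ hL]
    linarith
  rw [abs_lt] at h2 h4 ⊢
  constructor <;> linarith [h2.1, h2.2, h4.1, h4.2]
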